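/- arXiv:math-ph/0112059 — 3 statements merged into one kernel-verified Lean document; each statement's English description precedes it below -/
import Mathlib

section
/- Suppose l₀(ρ(h)v) = χ(h)·l₀(v) and ρ(h)b₀ = χ(h)·b₀ for all h ∈ H, v ∈ B; that for every g ∈ G the map x ↦ p(g⁻¹·s(x)) is a measurable bijection of X preserving μ; that for every v ∈ B the map x ↦ l₀(ρ(s(x))⁻¹v)·ρ(s(x))b₀ is Bochner integrable, so that Pv := M(Wv) is defined for all v ∈ B; and the reproducing property l₀(Pv) = l₀(v) for all v ∈ B. Then P commutes with the representation, P(ρ(g)v) = ρ(g)(Pv) for all g ∈ G and v ∈ B, and P is idempotent: P(Pv) = Pv for all v ∈ B. -/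
open MeasureTheory

/-!
The rank-one operator `K v = l₀(v) b₀` commutes with `ρ(h)` for `h ∈ H`, because `l₀` and `b₀` are
eigenvectors for the same character. Hence `ρ(g) K ρ(g)⁻¹` depends only on the coset `gH`, and
`P` is the average of these conjugates over `G ⧸ H`, parametrized by the section `s`. Invariance of
`μ` makes the average commute with `ρ`. The reproducing property says `K P = K`, so commuting `P`
past `ρ(s x)⁻¹` under the integral gives `P P = P`.
-/

section Conjugation

variable {𝕜 G B : Type*} [Semiring 𝕜] [Group G] [TopologicalSpace B] [AddCommMonoid B] [Module 𝕜 B]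

/-- The conjugate `ρ(g) K ρ(g)⁻¹` of a map `K : B → B`, not assumed linear, by a representation. -/
def conjBy (ρ : G →* (B ≃L[𝕜] B)) (K : B → B) (g : G) (v : B) : B :=
  ρ g (K ((ρ g)⁻¹ v))

variable {ρ : G →* (B ≃L[𝕜] B)} {K : B → B}

theorem conjBy_apply_map (g k : G) (v : B) :
    conjBy ρ K k (ρ g v) = ρ g (conjBy ρ K (g⁻¹ * k) v) := by
  have hinv : (ρ (g⁻¹ * k))⁻¹ v = (ρ k)⁻¹ (ρ g v) := by
    rw [← map_inv, ← map_inv, mul_inv_rev, inv_inv, map_mul]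
    rfl
  have hmul (w : B) : ρ g (ρ (g⁻¹ * k) w) = ρ k w := by
    conv_rhs => rw [← mul_inv_cancel_left g k, map_mul]
    rfl
  rw [conjBy, conjBy, hinv, hmul]

theorem conjBy_mul_of_commute {h : G} (hK : Function.Commute K (ρ h)) (g : G) :
    conjBy ρ K (g * h) = conjBy ρ K g := by
  funext v
  calc conjBy ρ K (g * h) v
      = ρ g (ρ h (K ((ρ h)⁻¹ ((ρ g)⁻¹ v)))) := by rw [conjBy, map_mul]; rfl
    _ = ρ g (K (ρ h ((ρ h)⁻¹ ((ρ g)⁻¹ v)))) := by rw [hK.eq]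
    _ = conjBy ρ K g v := by rw [conjBy]; congr 2; exact (ρ h).apply_symm_apply _

theorem conjBy_apply_eq_of_commute {P : B → B} {g : G} (hP : Function.Commute P (ρ g))
    (hKP : ∀ v, K (P v) = K v) (v : B) : conjBy ρ K g (P v) = conjBy ρ K g v := by
  have hP_inv : Function.Commute P ⇑(ρ g)⁻¹ := hP.inverses_right (ρ g).right_inv (ρ g).left_inv
  rw [conjBy, conjBy, ← hP_inv.eq, hKP]

end Conjugation

theorem integral_comp_of_measurePreserving {X Y E : Type*} [MeasurableSpace X] [MeasurableSpace Y]
    [NormedAddCommGroup E] [NormedSpace ℝ E] {μ : Measure X} {ν : Measure Y} {T : X → Y}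
    (hT : MeasurePreserving T μ ν) {f : Y → E} (hf : AEStronglyMeasurable f ν) :
    ∫ x, f (T x) ∂μ = ∫ y, f y ∂ν := by
  rw [← hT.map_eq] at hf ⊢
  exact (integral_map hT.aemeasurable hf).symm

section Average

variable {𝕜 G X B : Type*} [Semiring 𝕜] [Group G] [MeasurableSpace X]
  [NormedAddCommGroup B] [Module 𝕜 B] [NormedSpace ℝ B]

/-- The average of the conjugates `ρ(s x) K ρ(s x)⁻¹` over `x`. For `K v = l₀(v) b₀` it is the
composition of the reduced wavelet transform with the inverse one. -/
noncomputable def conjAverage (ρ : G →* (B ≃L[𝕜] B)) (K : B → B) (s : X → G) (μ : Measure X)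
    (v : B) : B :=
  ∫ x, conjBy ρ K (s x) v ∂μ

theorem conjAverage_idempotent {ρ : G →* (B ≃L[𝕜] B)} {K : B → B} {s : X → G} {μ : Measure X}
    (hcomm : ∀ g, Function.Commute (conjAverage ρ K s μ) (ρ g))
    (hrepr : ∀ v, K (conjAverage ρ K s μ v) = K v) (v : B) :
    conjAverage ρ K s μ (conjAverage ρ K s μ v) = conjAverage ρ K s μ v :=
  integral_congr_ae <| .of_forall fun x => conjBy_apply_eq_of_commute (hcomm (s x)) hrepr v

end Average

section Homogeneous

variable {𝕜 G X B : Type*} [RCLike 𝕜] [Group G] [MeasurableSpace X]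
  [NormedAddCommGroup B] [NormedSpace 𝕜 B] [NormedSpace ℝ B]
  {ρ : G →* (B ≃L[𝕜] B)} {K : B → B} {H : Subgroup G} {s : X → G} {p : G → X} {r : G → H}
  {μ : Measure X}

theorem conjAverage_apply_map (hdecomp : ∀ g, g = s (p g) * (r g : G))
    (hK : ∀ h : H, Function.Commute K (ρ (h : G))) {g : G}
    (hg : MeasurePreserving (fun x => p (g⁻¹ * s x)) μ μ) {v : B}
    (hv : AEStronglyMeasurable (fun x => conjBy ρ K (s x) v) μ) :
    conjAverage ρ K s μ (ρ g v) = ρ g (conjAverage ρ K s μ v) := by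
  have conjBy_section (k : G) : conjBy ρ K (s (p k)) = conjBy ρ K k := by
    conv_rhs => rw [hdecomp k, conjBy_mul_of_commute (hK (r k))]
  calc ∫ x, conjBy ρ K (s x) (ρ g v) ∂μ
      = ∫ x, ρ g (conjBy ρ K (s (p (g⁻¹ * s x))) v) ∂μ := by
        simp only [conjBy_apply_map, conjBy_section]
    _ = ρ g (∫ x, conjBy ρ K (s (p (g⁻¹ * s x))) v ∂μ) := (ρ g).integral_comp_comm _
    _ = ρ g (∫ x, conjBy ρ K (s x) v ∂μ) := by
        rw [integral_comp_of_measurePreserving hg hv]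

theorem wavelet_projection_commutes_and_idempotent_general [CompleteSpace B]
    (hdecomp : ∀ g, g = s (p g) * (r g : G))
    (hK : ∀ h : H, Function.Commute K (ρ (h : G)))
    (hmp : ∀ g : G, MeasurePreserving (fun x => p (g⁻¹ * s x)) μ μ)
    (hint : ∀ v, Integrable (fun x => conjBy ρ K (s x) v) μ)
    (hrepr : ∀ v, K (conjAverage ρ K s μ v) = K v) :
    (∀ g v, conjAverage ρ K s μ (ρ g v) = ρ g (conjAverage ρ K s μ v)) ∧
      ∀ v, conjAverage ρ K s μ (conjAverage ρ K s μ v) = conjAverage ρ K s μ v := by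
  have hcomm (g : G) : Function.Commute (conjAverage ρ K s μ) (ρ g) := fun v =>
    conjAverage_apply_map hdecomp hK (hmp g) (hint v).aestronglyMeasurable
  exact ⟨hcomm, conjAverage_idempotent hcomm hrepr⟩

end Homogeneous

section RankOne

variable {𝕜 B : Type*} [CommSemiring 𝕜] [TopologicalSpace B] [AddCommMonoid B] [Module 𝕜 B]

/-- The rank-one map `v ↦ l(v) b` attached to an analysing functional `l` and a synthesising
vector `b`; `l` is an arbitrary function, so the map need not be linear. -/
def rankOne (l : B → 𝕜) (b : B) (v : B) : B :=
  l v • b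

theorem rankOne_commute {T : B ≃L[𝕜] B} {l : B → 𝕜} {b : B} {c : 𝕜}
    (hl : ∀ v, l (T v) = c * l v) (hb : T b = c • b) : Function.Commute (rankOne l b) T := by
  intro v
  rw [rankOne, rankOne, map_smul, hl, hb, smul_smul, mul_comm]

theorem conjBy_rankOne {G : Type*} [Group G] (ρ : G →* (B ≃L[𝕜] B)) (l : B → 𝕜) (b : B) (g : G)
    (v : B) : conjBy ρ (rankOne l b) g v = l ((ρ g)⁻¹ v) • ρ g b :=
  map_smul (ρ g) _ b

end RankOne

/-- Under the eigenvector conditions on `l₀` and `b₀`, measure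
invariance of the geometric action, integrability making `Pv := M(Wv)` defined,
and the reproducing property `l₀(Pv) = l₀(v)`, the operator `P` commutes with
the representation `ρ` and is idempotent. -/
theorem wavelet_projection_commutes_and_idempotent
    {G : Type*} [Group G] (H : Subgroup G)
    {X : Type*} [MeasurableSpace X] (μ : Measure X)
    (s : X → G) (p : G → X) (r : G → H)
    (hdecomp : ∀ g : G, g = s (p g) * (r g : G))
    (huniq : ∀ (g : G) (x : X) (h : H), g = s x * (h : G) → x = p g ∧ h = r g)
    {B : Type*} [NormedAddCommGroup B] [NormedSpace ℂ B] [CompleteSpace B]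
    (ρ : G →* (B ≃L[ℂ] B)) (χ : H → ℂ) (hχ : ∀ h : H, χ h ≠ 0)
    (l₀ : B →L[ℂ] ℂ) (b₀ : B)
    (hl₀ : ∀ (h : H) (v : B), l₀ (ρ (h : G) v) = χ h * l₀ v)
    (hb₀ : ∀ h : H, ρ (h : G) b₀ = χ h • b₀)
    (hmp : ∀ g : G,
      MeasurePreserving (fun x : X => p (g⁻¹ * s x)) μ μ ∧
      Function.Bijective (fun x : X => p (g⁻¹ * s x)))
    (P : B → B)
    (hP : ∀ v : B, P v = ∫ x : X, (l₀ ((ρ (s x))⁻¹ v)) • ρ (s x) b₀ ∂μ)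
    (hint : ∀ v : B,
      Integrable (fun x : X => (l₀ ((ρ (s x))⁻¹ v)) • ρ (s x) b₀) μ)
    (hrepr : ∀ v : B, l₀ (P v) = l₀ v) :
    (∀ (g : G) (v : B), P (ρ g v) = ρ g (P v)) ∧ (∀ v : B, P (P v) = P v) := by
  obtain rfl : P = conjAverage ρ (rankOne l₀ b₀) s μ := funext fun v => by
    simp only [hP, conjAverage, conjBy_rankOne]
  exact wavelet_projection_commutes_and_idempotent_general hdecomp
    (fun h => rankOne_commute (hl₀ h) (hb₀ h)) (fun g => (hmp g).1)
    (fun v => by simpa only [conjBy_rankOne] using hint v)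
    (fun v => congrArg (· • b₀) (hrepr v))
end

section
/- In addition to the hypotheses making P := M∘W a well-defined idempotent commuting with ρ (namely: l₀(ρ(h)v) = χ(h)·l₀(v) and ρ(h)b₀ = χ(h)·b₀ for h ∈ H; for every g the map x ↦ p(g⁻¹·s(x)) is a measure-preserving measurable bijection of X; Bochner integrability of x ↦ l₀(ρ(s(x))⁻¹v)·ρ(s(x))b₀ for every v; and l₀(Pv) = l₀(v) for all v), assume that P is a continuous linear operator on B, that l₀(b₀) ≠ 0, and that ρ is topologically irreducible, i.e. the only closed subspaces of B invariant under all ρ(g) are {0} and B. Then P is the identity operator on B; in particular the inverse wavelet transform M is a left inverse of the reduced wavelet transform W. -/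
open MeasureTheory

/-!
The common kernel of the functionals `l₀ ∘ ρ(g)⁻¹` is a closed invariant subspace, so under
irreducibility it is trivial as soon as `l₀ ≠ 0`. Covariance of `l₀` and `b₀` under `H` makes
`a ↦ l₀(ρ(a)⁻¹v)·ρ(a)b₀` a function on `G ⧸ H`, and invariance of the measure then makes
`P = M ∘ W` commute with `ρ`. Hence `l₀(ρ(g)⁻¹Pv) = l₀(Pρ(g)⁻¹v) = l₀(ρ(g)⁻¹v)` for every `g`,
that is, `Pv - v` lies in the common kernel.
-/

section Algebra

variable {G : Type*} [Group G] {𝕜 : Type*} [Semiring 𝕜]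
  {B : Type*} [AddCommMonoid B] [Module 𝕜 B] [TopologicalSpace B]

/-- Topological irreducibility of a representation: `⊥` and `⊤` are the only closed invariant
subspaces. As in the source, the zero space is not excluded. -/
def IsTopologicallyIrreducible (ρ : G →* (B ≃L[𝕜] B)) : Prop :=
  ∀ V : Submodule 𝕜 B, IsClosed (V : Set B) →
    (∀ (g : G), ∀ v ∈ V, ρ g v ∈ V) → V = ⊥ ∨ V = ⊤

theorem representation_mul_apply (ρ : G →* (B ≃L[𝕜] B)) (a b : G) (v : B) :
    ρ (a * b) v = ρ a (ρ b v) :=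
  congrArg (· v) (map_mul ρ a b)

variable [TopologicalSpace 𝕜]

/-- The full wavelet transform on `G`, with coefficients `l₀(ρ(g)⁻¹v)`. The reduced transform
`W` on `X` is its composite with the section `s : X → G`. -/
def waveletTransform (ρ : G →* (B ≃L[𝕜] B)) (l₀ : B →L[𝕜] 𝕜) (v : B) (g : G) : 𝕜 :=
  l₀ ((ρ g)⁻¹ v)

variable {ρ : G →* (B ≃L[𝕜] B)} {l₀ : B →L[𝕜] 𝕜}

theorem waveletTransform_eq_map_inv (v : B) (g : G) :
    waveletTransform ρ l₀ v g = l₀ (ρ g⁻¹ v) := by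
  rw [waveletTransform, map_inv]

theorem waveletTransform_one (v : B) : waveletTransform ρ l₀ v 1 = l₀ v := by
  rw [waveletTransform, map_one, inv_one]
  rfl

theorem waveletTransform_map_apply (g a : G) (v : B) :
    waveletTransform ρ l₀ (ρ g v) a = waveletTransform ρ l₀ v (g⁻¹ * a) := by
  simp only [waveletTransform_eq_map_inv, ← representation_mul_apply, mul_inv_rev, inv_inv]

theorem waveletTransform_eq_mul_of_covariant {H : Subgroup G} {χ : H → 𝕜}
    (hl₀ : ∀ (h : H) (v : B), l₀ (ρ h v) = χ h * l₀ v) (v : B) (a : G) (h : H) :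
    waveletTransform ρ l₀ v a = χ h * waveletTransform ρ l₀ v (a * h) := by
  simp only [waveletTransform_eq_map_inv, ← hl₀, ← representation_mul_apply, mul_inv_rev,
    mul_inv_cancel_left]

theorem IsTopologicallyIrreducible.eq_zero_of_waveletTransform_eq_zero [T1Space 𝕜]
    (hρ : IsTopologicallyIrreducible ρ) (hl₀ : l₀ ≠ 0) {v : B}
    (hv : ∀ g, waveletTransform ρ l₀ v g = 0) : v = 0 := by
  let K : Submodule 𝕜 B := ⨅ g, (l₀ ∘L ((ρ g)⁻¹ : B ≃L[𝕜] B)).ker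
  have mem_K (w : B) : w ∈ K ↔ ∀ g, waveletTransform ρ l₀ w g = 0 := Submodule.mem_iInf _
  have isClosed_K : IsClosed (K : Set B) := by
    rw [Submodule.coe_iInf]
    exact isClosed_iInter fun g => ContinuousLinearMap.isClosed_ker _
  have invariant_K (g : G) (w : B) (hw : w ∈ K) : ρ g w ∈ K :=
    (mem_K _).2 fun a => by rw [waveletTransform_map_apply, (mem_K w).1 hw]
  have K_ne_top : K ≠ ⊤ := fun htop => hl₀ <| ContinuousLinearMap.ext fun w => by
    rw [← waveletTransform_one (ρ := ρ), (mem_K w).1 (htop ▸ Submodule.mem_top),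
      zero_apply]
  have K_eq_bot : K = ⊥ := (hρ K isClosed_K invariant_K).resolve_right K_ne_top
  exact (Submodule.mem_bot 𝕜).1 (K_eq_bot ▸ (mem_K v).2 hv)

end Algebra

theorem waveletTransform_smul_map_mul_right {G : Type*} [Group G] {𝕜 : Type*}
    [CommSemiring 𝕜] [TopologicalSpace 𝕜] {B : Type*} [AddCommMonoid B] [Module 𝕜 B]
    [TopologicalSpace B] {ρ : G →* (B ≃L[𝕜] B)} {l₀ : B →L[𝕜] 𝕜}
    {H : Subgroup G} {χ : H → 𝕜} {b₀ : B}
    (hl₀ : ∀ (h : H) (v : B), l₀ (ρ h v) = χ h * l₀ v)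
    (hb₀ : ∀ h : H, ρ h b₀ = χ h • b₀) (v : B) (a : G) (h : H) :
    waveletTransform ρ l₀ v (a * h) • ρ (a * h) b₀ = waveletTransform ρ l₀ v a • ρ a b₀ := by
  have hb : ρ (a * h) b₀ = χ h • ρ a b₀ := by
    rw [representation_mul_apply, hb₀, map_smul]
  rw [hb, smul_smul, mul_comm, ← waveletTransform_eq_mul_of_covariant hl₀]

section Integral

variable {G : Type*} [Group G] {H : Subgroup G} {X : Type*} [MeasurableSpace X]
  {𝕜 : Type*} [RCLike 𝕜] {B : Type*} [NormedAddCommGroup B] [NormedSpace 𝕜 B] [NormedSpace ℝ B]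

/-- The inverse wavelet transform `M`. The value is the junk `0` where the integrand is not
Bochner integrable or `B` is not complete. -/
noncomputable def inverseWaveletTransform (μ : Measure X) (ρ : G →* (B ≃L[𝕜] B)) (s : X → G)
    (b₀ : B) (f : X → 𝕜) : B :=
  ∫ x, f x • ρ (s x) b₀ ∂μ

variable {μ : Measure X} {ρ : G →* (B ≃L[𝕜] B)} {s : X → G} {χ : H → 𝕜} {l₀ : B →L[𝕜] 𝕜}
  {b₀ : B}

theorem map_inverseWaveletTransform_waveletTransform
    (hl₀ : ∀ (h : H) (v : B), l₀ (ρ h v) = χ h * l₀ v) (hb₀ : ∀ h : H, ρ h b₀ = χ h • b₀)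
    {g : G} {T : X → X} (hT : MeasurePreserving T μ μ)
    (hsT : ∀ x, ∃ h : H, g * s x = s (T x) * h) {v : B}
    (hmeas : AEStronglyMeasurable
      (fun x => waveletTransform ρ l₀ (ρ g v) (s x) • ρ (s x) b₀) μ) :
    ρ g (inverseWaveletTransform μ ρ s b₀ (waveletTransform ρ l₀ v ∘ s)) =
      inverseWaveletTransform μ ρ s b₀ (waveletTransform ρ l₀ (ρ g v) ∘ s) := by
  let F (w : B) (a : G) : B := waveletTransform ρ l₀ w a • ρ a b₀
  have F_translate (a : G) : ρ g (F v a) = F (ρ g v) (g * a) := by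
    simp only [F, waveletTransform_map_apply, inv_mul_cancel_left, map_smul,
      representation_mul_apply]
  have F_coset (x : X) : F (ρ g v) (g * s x) = F (ρ g v) (s (T x)) := by
    obtain ⟨h, hh⟩ := hsT x
    rw [hh]
    exact waveletTransform_smul_map_mul_right hl₀ hb₀ _ _ h
  calc ρ g (∫ x, F v (s x) ∂μ)
      = ∫ x, ρ g (F v (s x)) ∂μ := ((ρ g).integral_comp_comm _).symm
    _ = ∫ x, F (ρ g v) (s (T x)) ∂μ := by simp_rw [F_translate, F_coset]
    _ = ∫ x, F (ρ g v) (s x) ∂(μ.map T) :=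
      (integral_map hT.aemeasurable (hT.map_eq.symm ▸ hmeas)).symm
    _ = ∫ x, F (ρ g v) (s x) ∂μ := by rw [hT.map_eq]

/-- The map `T g` plays the role of the action of `g` on `X`. Taking `X = G`, `s = id` and
`T g = (g * ·)` gives the full wavelet transform on `G`. -/
theorem wavelet_projection_is_identity_of_irreducible_general [CompleteSpace B]
    (hl₀ : ∀ (h : H) (v : B), l₀ (ρ h v) = χ h * l₀ v) (hb₀ : ∀ h : H, ρ h b₀ = χ h • b₀)
    (T : G → X → X) (hT : ∀ g, MeasurePreserving (T g) μ μ)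
    (hsT : ∀ g x, ∃ h : H, g * s x = s (T g x) * h)
    (hint : ∀ v, Integrable (fun x => waveletTransform ρ l₀ v (s x) • ρ (s x) b₀) μ)
    (hrepr : ∀ v, l₀ (inverseWaveletTransform μ ρ s b₀ (waveletTransform ρ l₀ v ∘ s)) = l₀ v)
    (hl₀_ne : l₀ ≠ 0) (hρ : IsTopologicallyIrreducible ρ) (v : B) :
    inverseWaveletTransform μ ρ s b₀ (waveletTransform ρ l₀ v ∘ s) = v := by
  let P (w : B) : B := inverseWaveletTransform μ ρ s b₀ (waveletTransform ρ l₀ w ∘ s)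
  have P_commutes (g : G) (w : B) : ρ g (P w) = P (ρ g w) :=
    map_inverseWaveletTransform_waveletTransform hl₀ hb₀ (hT g) (hsT g)
      (hint _).aestronglyMeasurable
  refine sub_eq_zero.1 (hρ.eq_zero_of_waveletTransform_eq_zero hl₀_ne fun g => ?_)
  calc l₀ ((ρ g)⁻¹ (P v - v))
      = l₀ (P (ρ g⁻¹ v)) - l₀ (ρ g⁻¹ v) := by rw [← P_commutes, map_inv, map_sub, map_sub]
    _ = 0 := sub_eq_zero.2 (hrepr _)

end Integral

/-- If moreover `P = M∘W` is a continuous linear operator,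
`l₀(b₀) ≠ 0`, and `ρ` is topologically irreducible (the only closed invariant
subspaces are `{0}` and `B`), then `P` is the identity operator; in particular
the inverse wavelet transform `M` is a left inverse of the reduced wavelet
transform `W`. -/
theorem wavelet_projection_is_identity_of_irreducible
    {G : Type*} [Group G] (H : Subgroup G)
    {X : Type*} [MeasurableSpace X] (μ : Measure X)
    (s : X → G) (p : G → X) (r : G → H)
    (hdecomp : ∀ g : G, g = s (p g) * (r g : G))
    (huniq : ∀ (g : G) (x : X) (h : H), g = s x * (h : G) → x = p g ∧ h = r g)
    {B : Type*} [NormedAddCommGroup B] [NormedSpace ℂ B] [CompleteSpace B]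
    (ρ : G →* (B ≃L[ℂ] B)) (χ : H → ℂ) (hχ : ∀ h : H, χ h ≠ 0)
    (l₀ : B →L[ℂ] ℂ) (b₀ : B)
    (hl₀ : ∀ (h : H) (v : B), l₀ (ρ (h : G) v) = χ h * l₀ v)
    (hb₀ : ∀ h : H, ρ (h : G) b₀ = χ h • b₀)
    (hmp : ∀ g : G,
      MeasurePreserving (fun x : X => p (g⁻¹ * s x)) μ μ ∧
      Function.Bijective (fun x : X => p (g⁻¹ * s x)))
    (P : B →L[ℂ] B)
    (hP : ∀ v : B, P v = ∫ x : X, (l₀ ((ρ (s x))⁻¹ v)) • ρ (s x) b₀ ∂μ)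
    (hint : ∀ v : B,
      Integrable (fun x : X => (l₀ ((ρ (s x))⁻¹ v)) • ρ (s x) b₀) μ)
    (hrepr : ∀ v : B, l₀ (P v) = l₀ v)
    (hvac : l₀ b₀ ≠ 0)
    (hirr : ∀ V : Submodule ℂ B, IsClosed (V : Set B) →
      (∀ (g : G), ∀ v ∈ V, ρ g v ∈ V) → V = ⊥ ∨ V = ⊤) :
    ∀ v : B, P v = v := by
  intro v
  rw [hP v]
  exact wavelet_projection_is_identity_of_irreducible_general hl₀ hb₀ (fun g x => p (g * s x))
    (fun g => by simpa using (hmp g⁻¹).1) (fun g x => ⟨r (g * s x), hdecomp _⟩) hint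
    (fun w => (congrArg l₀ (hP w)).symm.trans (hrepr w)) (fun h => hvac (by simp [h])) hirr v
end

section
/- The integrated Schrödinger representation turns Heisenberg-group convolution into operator composition: for ℏ > 0, k₁, k₂ ∈ L¹(ℝ³) and f ∈ L²(ℝ,ℂ), σ_ℏ(k₁*k₂)f = σ_ℏ(k₁)(σ_ℏ(k₂)f), where σ_ℏ(k)f denotes the Bochner integral ∫_{ℝ³} k(g)·(σ_ℏ(g)f) dg in L²(ℝ,ℂ) and * is convolution over the Heisenberg group. -/
open MeasureTheory

/-- The multiplication law of the one-dimensional Heisenberg group `H¹ = ℝ³`: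
`(s,x,y)·(s',x',y') = (s+s'+(xy'−yx')/2, x+x', y+y')`. -/
noncomputable def heisMul (g g' : ℝ × ℝ × ℝ) : ℝ × ℝ × ℝ :=
  (g.1 + g'.1 + (g.2.1 * g'.2.2 - g.2.2 * g'.2.1) / 2, g.2.1 + g'.2.1, g.2.2 + g'.2.2)

/-- Inversion in the Heisenberg group: `(s,x,y)⁻¹ = (−s,−x,−y)`. -/
def heisInv (h : ℝ × ℝ × ℝ) : ℝ × ℝ × ℝ := (-h.1, -h.2.1, -h.2.2)

/-- Convolution over the Heisenberg group (with Lebesgue measure on `ℝ³` as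
Haar measure): `(k₁*k₂)(g) = ∫_{H¹} k₁(h)·k₂(h⁻¹·g) dh`. -/
noncomputable def heisConv (k₁ k₂ : ℝ × ℝ × ℝ → ℂ) (g : ℝ × ℝ × ℝ) : ℂ :=
  ∫ h : ℝ × ℝ × ℝ, k₁ h * k₂ (heisMul (heisInv h) g)

/-! The integrated form of a bounded measurable representation `π` is multiplicative because, by
Fubini, `π(k₁ * k₂)v = ∫ k₁(h) (∫ k₂(h⁻¹g) π(g)v dg) dh`, and the substitution `g ↦ hg` together
with `π(hg) = π(h)π(g)` turns the inner integral into `π(h)(π(k₂)v)`. The Schrödinger operators are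
such a representation: their phases form a cocycle for the Heisenberg law, and `g ↦ σ(g)f` is
strongly measurable because it has a jointly measurable kernel and `Lᵖ` is separable. -/

section GroupConvolution

variable {𝕜 G V : Type*} [RCLike 𝕜] [MeasurableSpace G] [NormedAddCommGroup V] [NormedSpace 𝕜 V]

variable {μ : Measure G} {k k₁ k₂ : G → 𝕜} {C : ℝ} {v : V}

lemma integrable_smul_apply {π : G → V →L[𝕜] V} (hπ : ∀ g, ‖π g‖ ≤ C)
    (hv : AEStronglyMeasurable (fun g ↦ π g v) μ) (hk : Integrable k μ) :
    Integrable (fun g ↦ k g • π g v) μ :=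
  hk.smul_bdd (C * ‖v‖) hv (.of_forall fun g ↦ (π g).le_of_opNorm_le (hπ g) v)

/-- The convolution `(k₁ * k₂)(g) = ∫ k₁(h) k₂(h⁻¹g) dμ(h)` on a possibly noncommutative group;
it is `0` at those `g` for which the integrand is not integrable. -/
noncomputable def groupConvolution [Group G] (μ : Measure G) (k₁ k₂ : G → 𝕜) (g : G) : 𝕜 :=
  ∫ h, k₁ h * k₂ (h⁻¹ * g) ∂μ

variable [NormedSpace ℝ V]

/-- The integrated form `π(k)v = ∫ k(g) π(g)v dμ(g)` of a family of operators `π`, the integral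
being taken pointwise (strongly) in `v`. -/
noncomputable def integratedForm (μ : Measure G) (π : G → V →L[𝕜] V) (k : G → 𝕜) (v : V) : V :=
  ∫ g, k g • π g v ∂μ

variable [Group G] [μ.IsMulLeftInvariant]

lemma integral_translate_smul_apply [MeasurableMul G] [CompleteSpace V]
    {π : G →ₙ* (V →L[𝕜] V)} (hπ : ∀ g, ‖π g‖ ≤ C)
    (hv : AEStronglyMeasurable (fun g ↦ π g v) μ) (hk : Integrable k μ) (h : G) :
    ∫ g, k (h⁻¹ * g) • π g v ∂μ = π h (integratedForm μ π k v) := by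
  calc ∫ g, k (h⁻¹ * g) • π g v ∂μ
      = ∫ g, k (h⁻¹ * (h * g)) • π (h * g) v ∂μ :=
        (integral_mul_left_eq_self (fun g ↦ k (h⁻¹ * g) • π g v) h).symm
    _ = ∫ g, π h (k g • π g v) ∂μ := by
        simp only [inv_mul_cancel_left, map_mul, mul_apply_eq_comp, map_smul]
    _ = π h (integratedForm μ π k v) :=
        (π h).integral_comp_comm (integrable_smul_apply hπ hv hk)

variable [MeasurableMul₂ G] [MeasurableInv G] [SFinite μ]

lemma integrable_groupConvolution_integrand (hk₁ : Integrable k₁ μ) (hk₂ : Integrable k₂ μ) :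
    Integrable (fun p : G × G ↦ k₁ p.1 * k₂ (p.1⁻¹ * p.2)) (μ.prod μ) :=
  (measurePreserving_prod_inv_mul μ μ).integrable_comp_of_integrable (hk₁.mul_prod hk₂)

theorem integratedForm_groupConvolution [CompleteSpace V] {π : G →ₙ* (V →L[𝕜] V)}
    (hπ : ∀ g, ‖π g‖ ≤ C) (hv : AEStronglyMeasurable (fun g ↦ π g v) μ)
    (hk₁ : Integrable k₁ μ) (hk₂ : Integrable k₂ μ) :
    integratedForm μ π (groupConvolution μ k₁ k₂) v =
      integratedForm μ π k₁ (integratedForm μ π k₂ v) := by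
  have h_int : Integrable (fun p : G × G ↦ (k₁ p.1 * k₂ (p.1⁻¹ * p.2)) • π p.2 v) (μ.prod μ) :=
    (integrable_groupConvolution_integrand hk₁ hk₂).smul_bdd (C * ‖v‖) hv.comp_snd
      (.of_forall fun p ↦ (π p.2).le_of_opNorm_le (hπ p.2) v)
  calc ∫ g, groupConvolution μ k₁ k₂ g • π g v ∂μ
      = ∫ g, ∫ h, (k₁ h * k₂ (h⁻¹ * g)) • π g v ∂μ ∂μ := by
        simp only [groupConvolution, integral_smul_const]
    _ = ∫ h, ∫ g, (k₁ h * k₂ (h⁻¹ * g)) • π g v ∂μ ∂μ := (integral_integral_swap h_int).symm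
    _ = ∫ h, k₁ h • π h (integratedForm μ π k₂ v) ∂μ := by
        simp only [mul_smul, integral_smul, integral_translate_smul_apply hπ hv hk₂]

end GroupConvolution

section LpMeasurability

open scoped ENNReal

lemma measurable_of_measurable_edist {α E : Type*} [MeasurableSpace α] [PseudoEMetricSpace E]
    [SecondCountableTopology E] [MeasurableSpace E] [BorelSpace E] {F : α → E}
    (hF : ∀ u, Measurable fun a ↦ edist (F a) u) : Measurable F := by
  refine measurable_of_isOpen fun U hU ↦ ?_
  choose! ε hε h_sub using EMetric.isOpen_iff.1 hU
  obtain ⟨T, hTU, hT, hUT⟩ := TopologicalSpace.countable_cover_nhdsWithin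
    (f := fun x ↦ Metric.eball x (ε x)) (s := U)
    fun x hx ↦ mem_nhdsWithin_of_mem_nhds (Metric.eball_mem_nhds x (hε x hx))
  have h_eq : U = ⋃ x ∈ T, Metric.eball x (ε x) :=
    hUT.antisymm (Set.iUnion₂_subset fun x hx ↦ h_sub x (hTU hx))
  rw [h_eq, Set.preimage_iUnion₂]
  exact .biUnion hT fun x _ ↦ measurableSet_lt (hF x) measurable_const

variable {α β E : Type*} [MeasurableSpace α] [MeasurableSpace β] [NormedAddCommGroup E]
  {μ : Measure β} [SFinite μ] {p : ℝ≥0∞}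

lemma measurable_eLpNorm_of_uncurry {G : α → β → E} (hp : p ≠ ∞)
    (hG : StronglyMeasurable (Function.uncurry G)) : Measurable fun a ↦ eLpNorm (G a) p μ := by
  obtain rfl | hp₀ := eq_or_ne p 0
  · simp only [eLpNorm_exponent_zero, measurable_const]
  · simp only [eLpNorm_eq_lintegral_rpow_enorm_toReal hp₀ hp]
    exact (hG.enorm.pow_const p.toReal).lintegral_prod_right'.pow_const _

lemma stronglyMeasurable_of_ae_eq_uncurry [SecondCountableTopology E] [IsSeparable μ]
    [Fact (1 ≤ p)] (hp : p ≠ ∞) {F : α → Lp E p μ} {G : α → β → E}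
    (hG : StronglyMeasurable (Function.uncurry G)) (hFG : ∀ a, F a =ᵐ[μ] G a) :
    StronglyMeasurable F := by
  borelize ↥(Lp E p μ)
  have : Fact (p ≠ ∞) := ⟨hp⟩
  refine (measurable_of_measurable_edist fun u ↦ ?_).stronglyMeasurable
  have h_edist (a : α) : edist (F a) u = eLpNorm (fun t ↦ G a t - u t) p μ := by
    rw [Lp.edist_def]
    exact eLpNorm_congr_ae ((hFG a).sub .rfl)
  simp only [h_edist]
  exact measurable_eLpNorm_of_uncurry hp
    (hG.sub ((Lp.stronglyMeasurable u).comp_measurable measurable_snd))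

end LpMeasurability

section HeisenbergGroup

lemma measurePreserving_heisMul_left (h : ℝ × ℝ × ℝ) :
    MeasurePreserving (heisMul h) volume volume := by
  let shear (p : (ℝ × ℝ) × ℝ) : (ℝ × ℝ) × ℝ :=
    (h.2 + p.1, h.1 + (h.2.1 * p.1.2 - h.2.2 * p.1.1) / 2 + p.2)
  have h_shear : MeasurePreserving shear (volume.prod volume) (volume.prod volume) :=
    (measurePreserving_add_left volume h.2).skew_product
      (g := fun q s ↦ h.1 + (h.2.1 * q.2 - h.2.2 * q.1) / 2 + s) (by fun_prop)
      (.of_forall fun q ↦ (measurePreserving_add_left volume _).map_eq)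
  have h_eq : heisMul h = Prod.swap ∘ shear ∘ Prod.swap := by
    funext g
    refine Prod.ext ?_ rfl
    simp only [heisMul, shear, Function.comp_apply, Prod.swap]
    ring
  rw [h_eq]
  exact Measure.measurePreserving_swap.comp (h_shear.comp Measure.measurePreserving_swap)

/-- The Heisenberg group `H¹`: a type synonym of `ℝ × ℝ × ℝ`, whose own multiplication is
componentwise, carrying `heisMul` as group law and Lebesgue measure as Haar measure. -/
def HeisenbergGroup : Type := ℝ × ℝ × ℝ

namespace HeisenbergGroup

noncomputable instance : Group HeisenbergGroup where
  mul := heisMul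
  one := (0, 0, 0)
  inv := heisInv
  mul_assoc a b c := by
    change heisMul (heisMul a b) c = heisMul a (heisMul b c)
    ext <;> simp only [heisMul] <;> ring
  one_mul a := by
    change heisMul (0, 0, 0) a = a
    ext <;> simp [heisMul]
  mul_one a := by
    change heisMul a (0, 0, 0) = a
    ext <;> simp [heisMul]
  inv_mul_cancel a := by
    change heisMul (heisInv a) a = (0, 0, 0)
    ext <;> simp only [heisMul, heisInv] <;> ring

noncomputable instance : MeasureSpace HeisenbergGroup := inferInstanceAs (MeasureSpace (ℝ × ℝ × ℝ))

instance : SFinite (volume : Measure HeisenbergGroup) :=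
  inferInstanceAs (SFinite (volume : Measure (ℝ × ℝ × ℝ)))

instance : MeasurableMul₂ HeisenbergGroup where
  measurable_mul := by
    change Measurable fun p : (ℝ × ℝ × ℝ) × (ℝ × ℝ × ℝ) ↦ heisMul p.1 p.2
    unfold heisMul
    fun_prop

instance : MeasurableInv HeisenbergGroup where
  measurable_inv := by
    change Measurable heisInv
    unfold heisInv
    fun_prop

instance : (volume : Measure HeisenbergGroup).IsMulLeftInvariant where
  map_mul_left_eq_self h := (measurePreserving_heisMul_left h).map_eq

end HeisenbergGroup

end HeisenbergGroup

section Schrodinger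

open scoped ENNReal

variable {E : Type*} [NormedAddCommGroup E] [NormedSpace ℂ E] {p : ℝ≥0∞} {ℏ : ℝ}

/-- The operator `σ_ℏ(g)` of the Schrödinger representation, acting on honest functions on the
line; the representation on `Lᵖ` is its action on almost-everywhere classes. -/
noncomputable def schrodingerAction (ℏ : ℝ) (g : ℝ × ℝ × ℝ) (f : ℝ → E) (t : ℝ) : E :=
  Complex.exp (Complex.I *
      ((2 * g.1 * ℏ - Real.sqrt (2 * ℏ) * g.2.2 * t + ℏ * g.2.1 * g.2.2 : ℝ) : ℂ)) •
    f (t - Real.sqrt (2 * ℏ) * g.2.1)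

lemma schrodingerAction_heisMul (hℏ : 0 ≤ ℏ) (g h : ℝ × ℝ × ℝ) (f : ℝ → E) :
    schrodingerAction ℏ (heisMul g h) f = schrodingerAction ℏ g (schrodingerAction ℏ h f) := by
  have h_sq : Real.sqrt (2 * ℏ) * Real.sqrt (2 * ℏ) = 2 * ℏ := Real.mul_self_sqrt (by positivity)
  funext t
  simp only [schrodingerAction, heisMul, smul_smul, ← Complex.exp_add, ← mul_add,
    ← Complex.ofReal_add]
  congr 1
  · congr 3
    linear_combination (-(g.2.1 * h.2.2)) * h_sq
  · congr 1
    ring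

lemma schrodingerAction_congr_ae {f f' : ℝ → E} (hf : f =ᵐ[volume] f') (ℏ : ℝ) (g : ℝ × ℝ × ℝ) :
    schrodingerAction ℏ g f =ᵐ[volume] schrodingerAction ℏ g f' :=
  ((measurePreserving_sub_right volume (Real.sqrt (2 * ℏ) * g.2.1)).quasiMeasurePreserving.ae
    hf).mono fun _ ht ↦ congrArg (_ • ·) ht

lemma stronglyMeasurable_uncurry_schrodingerAction {f : ℝ → E} (hf : StronglyMeasurable f)
    (ℏ : ℝ) : StronglyMeasurable (Function.uncurry fun g ↦ schrodingerAction ℏ g f) := by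
  have h_phase : Measurable fun q : (ℝ × ℝ × ℝ) × ℝ ↦ Complex.exp (Complex.I *
      ((2 * q.1.1 * ℏ - Real.sqrt (2 * ℏ) * q.1.2.2 * q.2 + ℏ * q.1.2.1 * q.1.2.2 : ℝ) : ℂ)) := by
    fun_prop
  exact h_phase.stronglyMeasurable.smul (hf.comp_measurable
    (g := fun q : (ℝ × ℝ × ℝ) × ℝ ↦ q.2 - Real.sqrt (2 * ℏ) * q.1.2.1) (by fun_prop))

lemma map_heisMul_of_ae_eq_schrodingerAction (hℏ : 0 ≤ ℏ)
    {σ : ℝ × ℝ × ℝ → Lp E p (volume : Measure ℝ) → Lp E p (volume : Measure ℝ)}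
    (hσ : ∀ g f, σ g f =ᵐ[volume] schrodingerAction ℏ g f)
    (g h : ℝ × ℝ × ℝ) (f : Lp E p (volume : Measure ℝ)) :
    σ (heisMul g h) f = σ g (σ h f) :=
  Lp.ext <| calc
    σ (heisMul g h) f =ᵐ[volume] schrodingerAction ℏ (heisMul g h) f := hσ _ f
    _ = schrodingerAction ℏ g (schrodingerAction ℏ h f) := schrodingerAction_heisMul hℏ g h f
    _ =ᵐ[volume] schrodingerAction ℏ g (σ h f) := schrodingerAction_congr_ae (hσ h f).symm ℏ g
    _ =ᵐ[volume] σ g (σ h f) := (hσ g (σ h f)).symm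

theorem integrated_schrodinger_representation_multiplicative_general
    [CompleteSpace E] [SecondCountableTopology E] [Fact (1 ≤ p)] (hp : p ≠ ∞) (hℏ : 0 ≤ ℏ)
    (σ : ℝ × ℝ × ℝ → (Lp E p (volume : Measure ℝ) ≃ₗᵢ[ℂ] Lp E p (volume : Measure ℝ)))
    (hσ : ∀ g f, σ g f =ᵐ[volume] schrodingerAction ℏ g f) {k₁ k₂ : ℝ × ℝ × ℝ → ℂ}
    (hk₁ : Integrable k₁) (hk₂ : Integrable k₂) (f : Lp E p (volume : Measure ℝ)) :
    ∫ g, heisConv k₁ k₂ g • σ g f = ∫ g, k₁ g • σ g (∫ g', k₂ g' • σ g' f) := by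
  let π : HeisenbergGroup →ₙ* (Lp E p (volume : Measure ℝ) →L[ℂ] Lp E p (volume : Measure ℝ)) :=
    { toFun g := (σ g).toLinearIsometry.toContinuousLinearMap
      map_mul' g h := ContinuousLinearMap.ext fun f ↦
        map_heisMul_of_ae_eq_schrodingerAction hℏ (σ := fun g ↦ σ g) hσ g h f }
  have h_norm (g : HeisenbergGroup) : ‖π g‖ ≤ 1 :=
    (σ g).toLinearIsometry.norm_toContinuousLinearMap_le
  have h_meas : StronglyMeasurable fun g ↦ σ g f := stronglyMeasurable_of_ae_eq_uncurry hp
    (stronglyMeasurable_uncurry_schrodingerAction (Lp.stronglyMeasurable f) ℏ) fun g ↦ hσ g f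
  exact integratedForm_groupConvolution (μ := (volume : Measure HeisenbergGroup)) h_norm
    h_meas.aestronglyMeasurable hk₁ hk₂

end Schrodinger

/-- The integrated Schrödinger representation turns
Heisenberg-group convolution into operator composition: if `σ` is the family of
unitary operators on `L²(ℝ,ℂ)` given by the Schrödinger formula
`[σ_ℏ(s,x,y)f](t) = exp(i(2sℏ − √(2ℏ)·y·t + ℏ·x·y))·f(t − √(2ℏ)·x)`, then for
`k₁, k₂ ∈ L¹(ℝ³)` and `f ∈ L²(ℝ,ℂ)` one has `σ_ℏ(k₁*k₂)f = σ_ℏ(k₁)(σ_ℏ(k₂)f)`,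
where `σ_ℏ(k)f = ∫_{ℝ³} k(g)·(σ_ℏ(g)f) dg` (Bochner integral). -/
theorem integrated_schrodinger_representation_multiplicative
    (ℏ : ℝ) (hℏ : 0 < ℏ)
    (σ : ℝ × ℝ × ℝ → (Lp ℂ 2 (volume : Measure ℝ) ≃ₗᵢ[ℂ] Lp ℂ 2 (volume : Measure ℝ)))
    (hσ : ∀ (s x y : ℝ) (f : Lp ℂ 2 (volume : Measure ℝ)),
      (σ (s, x, y) f : ℝ → ℂ) =ᵐ[volume] fun t : ℝ =>
        Complex.exp (Complex.I *
            ((2 * s * ℏ - Real.sqrt (2 * ℏ) * y * t + ℏ * x * y : ℝ) : ℂ)) *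
          (f : ℝ → ℂ) (t - Real.sqrt (2 * ℏ) * x))
    (k₁ k₂ : ℝ × ℝ × ℝ → ℂ)
    (hk₁ : Integrable k₁ (volume : Measure (ℝ × ℝ × ℝ)))
    (hk₂ : Integrable k₂ (volume : Measure (ℝ × ℝ × ℝ)))
    (f : Lp ℂ 2 (volume : Measure ℝ)) :
    ∫ g : ℝ × ℝ × ℝ, heisConv k₁ k₂ g • (σ g f) =
      ∫ g : ℝ × ℝ × ℝ, k₁ g • σ g (∫ g' : ℝ × ℝ × ℝ, k₂ g' • σ g' f) :=
  integrated_schrodinger_representation_multiplicative_general (by norm_num) hℏ.le σ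
    (fun g f ↦ hσ g.1 g.2.1 g.2.2 f) hk₁ hk₂ f
end
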